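/- Suppose n is even. Fix γ ∈ (0,1/2), a real α with 1/(n−Δ) < α < 1/(n−1), S > 0, and φ as described. Define I(s) = (1/(2π))·lim_{R→∞} ∫_{−R}^{R} e(y^n)·sin(2πsy)·(dy/y) (the integrand being extended by its limiting value 2πs at y = 0). Then there exist C > 0 and t₁ > 0 such that for every real t ∈ (0, t₁] and every s ∈ [−S, S], the limit I(s) exists and |U*(t, γ + s·t^{1/n}) − (1/2 − I(s))| ≤ C·t^{αn−1}. -/

import Mathlib

open Filter Finset MeasureTheory

/-- `e(ξ) = exp(2πiξ)`. -/
noncomputable def ee (ξ : ℝ) : ℂ := Complex.exp (2 * Real.pi * Complex.I * ξ)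

/-- The partial sum defining `U(t,x)`:
`2γ + Σ_{0<|k|≤K} (sin(2πγk)/(πk))·e(t·k^n + x·k)`. -/
noncomputable def Upartial (n : ℕ) (γ t x : ℝ) (K : ℕ) : ℂ :=
  Complex.ofReal (2 * γ) +
    ∑ k ∈ (Finset.Icc (-(K : ℤ)) (K : ℤ)).filter (· ≠ 0),
      Complex.ofReal (Real.sin (2 * Real.pi * γ * (k : ℝ)) / (Real.pi * (k : ℝ))) *
        ee (t * (k : ℝ) ^ n + x * (k : ℝ))

/-- The smooth cutoff `φ`: `C^∞`, `φ(x) = 1` for `|x| ≤ 1/2`, `φ(x) = 0` for `|x| ≥ 2`,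
and `φ(x) + φ(1/x) = 1` for all `x ≠ 0`. -/
def GoodPhi (φ : ℝ → ℝ) : Prop :=
  ContDiff ℝ (⊤ : ℕ∞) φ ∧ (∀ x : ℝ, |x| ≤ 1 / 2 → φ x = 1) ∧ (∀ x : ℝ, 2 ≤ |x| → φ x = 0) ∧
    (∀ x : ℝ, x ≠ 0 → φ x + φ x⁻¹ = 1)

/-- `U*(t,x) = 2γ + (1/π)·Σ_{k≠0} φ(k·t^α)·(sin(2πγk)/k)·e(t·k^n + x·k)`
(the `k = 0` term vanishes since `sin(0)/0 = 0`). -/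
noncomputable def Ustar (n : ℕ) (γ : ℝ) (φ : ℝ → ℝ) (α t x : ℝ) : ℂ :=
  Complex.ofReal (2 * γ) + Complex.ofReal (1 / Real.pi) *
    ∑' k : ℤ,
      Complex.ofReal (φ ((k : ℝ) * t ^ α) * (Real.sin (2 * Real.pi * γ * (k : ℝ)) / (k : ℝ))) *
        ee (t * (k : ℝ) ^ n + x * (k : ℝ))

/-- The truncated integral `∫_{−R}^{R} e(y^n)·sin(2πsy)·dy/y`, the integrand extended by its
limiting value `2πs` at `y = 0`. -/
noncomputable def Iint (n : ℕ) (s R : ℝ) : ℂ :=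
  ∫ y in (-R)..R,
    (if y = 0 then Complex.ofReal (2 * Real.pi * s)
      else ee (y ^ n) * Complex.ofReal (Real.sin (2 * Real.pi * s * y)) / Complex.ofReal y)


lemma ee_norm (x : ℝ) : ‖ee x‖ = 1 := by
  unfold ee
  rw [show (2 * Real.pi * Complex.I * x : ℂ) = ((2 * Real.pi * x : ℝ) : ℂ) * Complex.I by
    push_cast; ring]
  exact Complex.norm_exp_ofReal_mul_I _

lemma ee_add (x y : ℝ) : ee (x + y) = ee x * ee y := by
  unfold ee; rw [← Complex.exp_add]; congr 1; push_cast; ring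

lemma ee_zero : ee 0 = 1 := by simp [ee]

lemma ee_hasDerivAt (x : ℝ) : HasDerivAt ee (2 * Real.pi * Complex.I * ee x) x := by
  unfold ee
  have h : HasDerivAt (fun x : ℝ => (2 * Real.pi * Complex.I * x : ℂ)) (2 * Real.pi * Complex.I) x := by
    simpa using (Complex.ofRealCLM.hasDerivAt (x := x)).const_mul (2 * Real.pi * Complex.I : ℂ)
  convert h.cexp using 1; ring

lemma ee_contDiff : ContDiff ℝ (⊤ : ℕ∞) ee := by
  unfold ee
  apply ContDiff.cexp
  exact contDiff_const.mul Complex.ofRealCLM.contDiff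

lemma ee_cont : Continuous ee := ee_contDiff.continuous

lemma ee_iter (i : ℕ) : iteratedDeriv i ee = fun x => (2 * Real.pi * Complex.I) ^ i * ee x := by
  induction i with
  | zero => simp
  | succ i ih =>
    rw [iteratedDeriv_succ, ih]
    ext x
    rw [((ee_hasDerivAt x).const_mul _).deriv]; ring

lemma ee_iter_norm (i : ℕ) (x : ℝ) : ‖iteratedFDeriv ℝ i ee x‖ = (2 * Real.pi) ^ i := by
  rw [norm_iteratedFDeriv_eq_norm_iteratedDeriv, ee_iter, norm_mul, ee_norm, norm_pow]
  simp [abs_of_pos Real.pi_pos]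

/-- amplitude-cut phase -/
noncomputable def GG (n : ℕ) (α t : ℝ) (ψ : ℝ → ℝ) (y : ℝ) : ℂ :=
  (ψ (y * t ^ α) : ℂ) * ee (t * y ^ n)

noncomputable def TT (n : ℕ) (α t : ℝ) (ψ : ℝ → ℝ) (v : ℝ) : ℂ :=
  ∫ y, GG n α t ψ y * ee (v * y)

structure GoodCut (ψ : ℝ → ℝ) : Prop where
  smooth : ContDiff ℝ (⊤ : ℕ∞) ψ
  supp : ∀ x : ℝ, 2 ≤ |x| → ψ x = 0

lemma GoodCut.hcs {ψ : ℝ → ℝ} (h : GoodCut ψ) : HasCompactSupport ψ := by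
  apply HasCompactSupport.of_support_subset_isCompact (isCompact_Icc (a := (-2 : ℝ)) (b := 2))
  intro x hx
  by_contra hc
  apply hx
  apply h.supp
  by_contra h2
  push Not at h2
  rw [abs_lt] at h2
  exact hc ⟨h2.1.le, h2.2.le⟩

lemma GG_contDiff (n : ℕ) (α t : ℝ) {ψ : ℝ → ℝ} (h : GoodCut ψ) :
    ContDiff ℝ (⊤ : ℕ∞) (GG n α t ψ) := by
  unfold GG
  apply ContDiff.mul
  · exact Complex.ofRealCLM.contDiff.comp (h.smooth.comp (contDiff_id.mul contDiff_const))
  · exact ee_contDiff.comp (contDiff_const.mul (contDiff_id.pow n))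

lemma GG_zero {n : ℕ} {α t : ℝ} (ht : 0 < t) {ψ : ℝ → ℝ} (h : GoodCut ψ) {y : ℝ}
    (hy : 2 * t ^ (-α) ≤ |y|) : GG n α t ψ y = 0 := by
  unfold GG
  have hp : 0 < t ^ α := Real.rpow_pos_of_pos ht _
  rw [h.supp]; · simp
  rw [abs_mul, abs_of_pos hp]
  rw [Real.rpow_neg ht.le] at hy
  calc (2:ℝ) = 2 * (t ^ α)⁻¹ * t ^ α := by field_simp
    _ ≤ _ := by gcongr

lemma GG_hcs {n : ℕ} {α t : ℝ} (ht : 0 < t) {ψ : ℝ → ℝ} (h : GoodCut ψ) :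
    HasCompactSupport (GG n α t ψ) := by
  apply HasCompactSupport.of_support_subset_isCompact
    (isCompact_Icc (a := -(2 * t ^ (-α))) (b := 2 * t ^ (-α)))
  intro x hx
  by_contra hc
  apply hx
  apply GG_zero ht h
  by_contra h2
  push Not at h2
  rw [abs_lt] at h2
  exact hc ⟨h2.1.le, h2.2.le⟩

lemma GG_iter_zero {n : ℕ} {α t : ℝ} (ht : 0 < t) {ψ : ℝ → ℝ} (h : GoodCut ψ) {y : ℝ} (N : ℕ)
    (hy : 2 * t ^ (-α) < |y|) : iteratedDeriv N (GG n α t ψ) y = 0 := by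
  have : GG n α t ψ =ᶠ[nhds y] fun _ => 0 := by
    have : ∀ᶠ z in nhds y, 2 * t ^ (-α) < |z| :=
      (continuous_abs.tendsto y).eventually (lt_mem_nhds hy)
    filter_upwards [this] with z hz using GG_zero ht h hz.le
  rw [this.iteratedDeriv_eq]
  simp

lemma psi_iter_bound {ψ : ℝ → ℝ} (h : GoodCut ψ) (N : ℕ) :
    ∃ C : ℝ, 1 ≤ C ∧ ∀ i ≤ N, ∀ x, ‖iteratedDeriv i ψ x‖ ≤ C := by
  have h1 : ∀ i : ℕ, ∃ C : ℝ, ∀ x, ‖iteratedDeriv i ψ x‖ ≤ C := by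
    intro i
    have hc : HasCompactSupport (iteratedFDeriv ℝ i ψ) := h.hcs.iteratedFDeriv i
    simp_rw [← norm_iteratedFDeriv_eq_norm_iteratedDeriv]
    exact hc.exists_bound_of_continuous (h.smooth.continuous_iteratedFDeriv (by exact_mod_cast le_top))
  choose C hC using h1
  refine ⟨1 + ∑ i ∈ range (N + 1), |C i|, ?_, ?_⟩
  · have : 0 ≤ ∑ i ∈ range (N + 1), |C i| := Finset.sum_nonneg fun _ _ => abs_nonneg _
    linarith
  · intro i hi x
    have := Finset.single_le_sum (f := fun i => |C i|) (s := range (N + 1)) (fun _ _ => abs_nonneg _)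
      (Finset.mem_range.2 (Nat.lt_succ_of_le hi))
    have h2 := hC i x
    have h3 := le_abs_self (C i)
    linarith

lemma phase_iter_bound {n : ℕ} {α t : ℝ} (ht : 0 < t) (ht1 : t ≤ 1) (hα : 1 ≤ α * n)
    {y : ℝ} (hy : |y| ≤ 2 * t ^ (-α)) (i : ℕ) (hi : 1 ≤ i) :
    ‖iteratedFDeriv ℝ i (fun y : ℝ => t * y ^ n) y‖ ≤
      (n.factorial * 2 ^ n * t ^ (1 - α * (n - 1))) ^ i := by
  rw [norm_iteratedFDeriv_eq_norm_iteratedDeriv]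
  rw [iteratedDeriv_const_mul_field, iteratedDeriv_pow]
  have hF : (1:ℝ) ≤ n.factorial := by exact_mod_cast Nat.one_le_iff_ne_zero.2 n.factorial_ne_zero
  by_cases hin : n < i
  · rw [Nat.descFactorial_of_lt hin]; simp; positivity
  push Not at hin
  have h1 : (n.descFactorial i : ℝ) ≤ n.factorial := by
    have := Nat.factorial_mul_descFactorial hin
    have h2 : 1 ≤ (n - i).factorial := Nat.one_le_iff_ne_zero.2 (Nat.factorial_ne_zero _)
    exact_mod_cast (by nlinarith : n.descFactorial i ≤ n.factorial)
  rw [Real.norm_eq_abs, abs_mul, abs_mul, abs_pow, abs_of_pos ht, Nat.abs_cast]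
  have h2 : |y| ^ (n - i) ≤ 2 ^ n * t ^ (-α * (n - i : ℕ)) := by
    calc |y| ^ (n - i) ≤ (2 * t ^ (-α)) ^ (n - i) := by gcongr
      _ = 2 ^ (n - i) * t ^ (-α * (n - i : ℕ)) := by
        rw [mul_pow, Real.rpow_mul ht.le, Real.rpow_natCast]
      _ ≤ _ := by gcongr <;> [norm_num; omega]
  have h3 : t * t ^ (-α * (n - i : ℕ)) ≤ (t ^ (1 - α * (n - 1))) ^ i := by
    rw [← Real.rpow_natCast, ← Real.rpow_mul ht.le]
    nth_rewrite 1 [← Real.rpow_one t]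
    rw [← Real.rpow_add ht]
    apply Real.rpow_le_rpow_of_exponent_ge ht ht1
    rw [Nat.cast_sub hin]
    have : (1:ℝ) ≤ i := by exact_mod_cast hi
    nlinarith
  calc t * (n.descFactorial i * |y| ^ (n - i)) 
      ≤ t * (n.factorial * (2 ^ n * t ^ (-α * (n - i : ℕ)))) := by gcongr
    _ = (n.factorial * 2 ^ n) * (t * t ^ (-α * (n - i : ℕ))) := by ring
    _ ≤ (n.factorial * 2 ^ n) ^ i * (t ^ (1 - α * (n - 1))) ^ i := by
      gcongr
      apply le_self_pow₀ _ (by omega)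
      have : (1:ℝ) ≤ 2 ^ n := one_le_pow₀ (by norm_num)
      nlinarith
    _ = _ := by rw [← mul_pow]

lemma GG_iter_bound (n : ℕ) {α : ℝ} (hα0 : 0 < α) (hα : 1 ≤ α * n) {ψ : ℝ → ℝ} (h : GoodCut ψ) (N : ℕ) :
    ∃ C : ℝ, 0 < C ∧ ∀ t, 0 < t → t ≤ 1 → ∀ y, 
      ‖iteratedDeriv N (GG n α t ψ) y‖ ≤ C * (t ^ (1 - α * (n - 1))) ^ N := by
  obtain ⟨C₁, hC1, hC⟩ := psi_iter_bound h N
  have hle : ∀ k : ℕ, (k : WithTop ℕ∞) ≤ ((⊤ : ℕ∞) : WithTop ℕ∞) := fun k => by exact_mod_cast le_top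
  set F : ℝ := n.factorial * 2 ^ n with hF
  have hF1 : 1 ≤ F := by
    have : (1:ℝ) ≤ n.factorial := by exact_mod_cast Nat.one_le_iff_ne_zero.2 n.factorial_ne_zero
    have : (1:ℝ) ≤ 2 ^ n := one_le_pow₀ (by norm_num)
    nlinarith
  refine ⟨∑ i ∈ range (N + 1), (N.choose i : ℝ) * C₁ * ((N - i).factorial * (2 * Real.pi) ^ (N - i) * F ^ (N - i)), ?_, ?_⟩
  · apply Finset.sum_pos
    · intro i hi
      have : 0 < N.choose i := Nat.choose_pos (by simpa [Nat.lt_succ_iff] using hi)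
      have := Real.pi_pos
      positivity
    · simp
  intro t ht ht1 y
  by_cases hy : 2 * t ^ (-α) < |y|
  · rw [GG_iter_zero ht h N hy]
    simp
    apply mul_nonneg
    · apply Finset.sum_nonneg; intro i hi; have := Real.pi_pos; positivity
    · positivity
  push Not at hy
  set l := t ^ (1 - α * (n - 1)) with hl
  have hl0 : 0 < l := Real.rpow_pos_of_pos ht _
  have hal : t ^ α ≤ l := Real.rpow_le_rpow_of_exponent_ge ht ht1 (by nlinarith)
  rw [← norm_iteratedFDeriv_eq_norm_iteratedDeriv]
  have c1 : ContDiff ℝ (⊤ : ℕ∞) (fun y : ℝ => (ψ (y * t ^ α) : ℂ)) := 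
    Complex.ofRealCLM.contDiff.comp (h.smooth.comp (contDiff_id.mul contDiff_const))
  have cp : ContDiff ℝ (⊤ : ℕ∞) (fun y : ℝ => t * y ^ n) := (contDiff_const.mul (contDiff_id.pow n))
  have c2 : ContDiff ℝ (⊤ : ℕ∞) (ee ∘ fun y : ℝ => t * y ^ n) := ee_contDiff.comp cp
  have key := norm_iteratedFDeriv_mul_le (n := N) c1 c2 y (by exact_mod_cast le_top)
  refine key.trans ?_
  rw [Finset.sum_mul]
  apply Finset.sum_le_sum
  intro i hi
  have hi' : i ≤ N := by simpa [Nat.lt_succ_iff] using hi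
  have e1 : ‖iteratedFDeriv ℝ i (fun y : ℝ => (ψ (y * t ^ α) : ℂ)) y‖ ≤ C₁ * l ^ i := by
    have h1 : ‖iteratedFDeriv ℝ i (fun y : ℝ => (ψ (y * t ^ α) : ℂ)) y‖ = ‖iteratedFDeriv ℝ i (fun y : ℝ => (ψ (y * t ^ α))) y‖ :=
      LinearIsometry.norm_iteratedFDeriv_comp_left Complex.ofRealLI 
       (f := fun y : ℝ => (ψ (y * t ^ α))) (n := (⊤ : ℕ∞)) (h.smooth.comp (contDiff_id.mul contDiff_const)).contDiffAt (by exact_mod_cast le_top)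
    rw [h1, norm_iteratedFDeriv_eq_norm_iteratedDeriv]
    have h2 : (fun y : ℝ => (ψ (y * t ^ α))) = fun y => ψ (t ^ α * y) := by ext; rw [mul_comm]
    rw [h2, iteratedDeriv_comp_const_mul (h.smooth.of_le (by exact_mod_cast le_top))]
    simp only [norm_mul, norm_pow]
    rw [mul_comm, Real.norm_of_nonneg (Real.rpow_nonneg ht.le _)]
    gcongr
    exact hC i hi' _
  have e2 : ‖iteratedFDeriv ℝ (N - i) (ee ∘ fun y : ℝ => t * y ^ n) y‖ ≤ 
      (N - i).factorial * (2 * Real.pi) ^ (N - i) * (F * l) ^ (N - i) := by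
    refine norm_iteratedFDeriv_comp_le (N := ((⊤ : ℕ∞) : WithTop ℕ∞)) ee_contDiff cp (hle _) y ?_ ?_
    · intro j hj
      rw [ee_iter_norm]
      apply pow_le_pow_right₀ _ hj
      linarith [Real.pi_gt_three]
    · intro j hj _
      exact phase_iter_bound ht ht1 hα hy j hj
  calc _ ≤ (N.choose i : ℝ) * (C₁ * l ^ i) * ((N - i).factorial * (2 * Real.pi) ^ (N - i) * (F * l) ^ (N - i)) := by
        gcongr
    _ = N.choose i * C₁ * ((N - i).factorial * (2 * Real.pi) ^ (N - i) * F ^ (N - i)) * (l ^ i * l ^ (N - i)) := by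
      rw [mul_pow]; ring
    _ = _ := by rw [← pow_add, Nat.add_sub_cancel' hi']

section
open scoped FourierTransform SchwartzMap

lemma ee_fourier (f : ℝ → ℂ) (w : ℝ) : 𝓕 f w = ∫ y, f y * ee (-w * y) := by
  rw [Real.fourier_real_eq_integral_exp_smul]
  congr 1; ext y
  rw [smul_eq_mul, mul_comm]
  congr 1
  unfold ee; congr 1; push_cast; ring

lemma TT_eq (n : ℕ) (α t : ℝ) (ψ : ℝ → ℝ) (v : ℝ) : TT n α t ψ v = 𝓕 (GG n α t ψ) (-v) := by
  rw [ee_fourier]; simp [TT]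

lemma GG_integrable {n : ℕ} {α t : ℝ} (ht : 0 < t) {ψ : ℝ → ℝ} (h : GoodCut ψ) :
    Integrable (GG n α t ψ) :=
  (GG_contDiff n α t h).continuous.integrable_of_hasCompactSupport (GG_hcs ht h)

lemma GG_iter_integrable {n : ℕ} {α t : ℝ} (ht : 0 < t) {ψ : ℝ → ℝ} (h : GoodCut ψ) (N : ℕ) :
    Integrable (iteratedDeriv N (GG n α t ψ)) := by
  apply Continuous.integrable_of_hasCompactSupport
  · exact (GG_contDiff n α t h).continuous_iteratedDeriv N (by exact_mod_cast le_top)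
  · apply HasCompactSupport.of_support_subset_isCompact
      (isCompact_Icc (a := -(2 * t ^ (-α))) (b := 2 * t ^ (-α)))
    intro x hx
    by_contra hc
    apply hx
    apply GG_iter_zero ht h
    by_contra h2
    push Not at h2
    rw [abs_le] at h2
    exact hc h2

lemma TT_decay0 (n : ℕ) {α : ℝ} (hα0 : 0 < α) (hα : 1 ≤ α * n) {ψ : ℝ → ℝ} (h : GoodCut ψ) (N : ℕ) :
    ∃ C : ℝ, 0 < C ∧ ∀ t, 0 < t → t ≤ 1 → ∀ v, 
      |v| ^ N * ‖TT n α t ψ v‖ ≤ C * ((t ^ (1 - α * (n - 1))) ^ N * t ^ (-α)) := by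
  obtain ⟨C, hC, hb⟩ := GG_iter_bound n hα0 hα h N
  refine ⟨4 * C, by positivity, fun t ht ht1 v => ?_⟩
  have h1 : 𝓕 (iteratedDeriv N (GG n α t ψ)) (-v) = _ := 
    congrFun (Real.fourier_iteratedDeriv (N := ⊤) (GG_contDiff n α t h) 
    (fun k _ => GG_iter_integrable ht h k) (n := N) le_top) (-v)
  have h2 : ‖𝓕 (iteratedDeriv N (GG n α t ψ)) (-v)‖ ≤ 4 * C * ((t ^ (1 - α * (n - 1))) ^ N * t ^ (-α)) := by
    rw [ee_fourier]
    set A := 2 * t ^ (-α)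
    have hA : 0 < A := by positivity
    rw [← setIntegral_eq_integral_of_forall_compl_eq_zero (s := Set.Icc (-A) A)]
    · have := norm_setIntegral_le_of_norm_le_const (μ := volume) (s := Set.Icc (-A) A) (f := fun y => iteratedDeriv N (GG n α t ψ) y * ee (- -v * y)) (C := C * (t ^ (1 - α * (n - 1))) ^ N)
        (by simp) (fun x _ => by rw [norm_mul, ee_norm, mul_one]; exact hb t ht ht1 x)
      refine this.trans (le_of_eq ?_)
      rw [Real.volume_real_Icc_of_le (by linarith)]
      simp only [A]; ring
    · intro x hx
      rw [GG_iter_zero ht h N, zero_mul]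
      by_contra h2
      push Not at h2
      rw [abs_le] at h2
      exact hx h2
  rw [h1, ← TT_eq, norm_smul, norm_pow] at h2
  refine le_trans ?_ h2
  gcongr
  simp [abs_of_pos Real.pi_pos]
  nlinarith [abs_nonneg v, Real.pi_gt_three]

lemma TT_decay (n : ℕ) {α : ℝ} (hα0 : 0 < α) (hα : 1 ≤ α * n) (hα2 : 0 < 1 - α * (n - 1)) {ψ : ℝ → ℝ} (h : GoodCut ψ) 
    {c : ℝ} (hc : 0 < c) :
    ∃ C : ℝ, 0 < C ∧ ∀ t, 0 < t → t ≤ 1 → ∀ v, c ≤ |v| →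
      ‖TT n α t ψ v‖ ≤ C * t / v ^ 2 := by
  obtain ⟨N, hN⟩ := exists_nat_ge ((1 + α) / (1 - α * (n - 1)))
  obtain ⟨C, hC, hb⟩ := TT_decay0 n hα0 hα h (N + 2)
  refine ⟨C / c ^ N, by positivity, fun t ht ht1 v hv => ?_⟩
  have hv0 : 0 < |v| := hc.trans_le hv
  rw [← sq_abs, le_div_iff₀ (by positivity), div_mul_eq_mul_div, le_div_iff₀ (by positivity)]
  have h3 : (t ^ (1 - α * (n - 1))) ^ (N + 2) * t ^ (-α) ≤ t := by
    rw [← Real.rpow_natCast, ← Real.rpow_mul ht.le, ← Real.rpow_add ht]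
    nth_rewrite 2 [← Real.rpow_one t]
    apply Real.rpow_le_rpow_of_exponent_ge ht ht1
    rw [div_le_iff₀ hα2] at hN
    push_cast
    nlinarith
  calc ‖TT n α t ψ v‖ * |v| ^ 2 * c ^ N ≤ ‖TT n α t ψ v‖ * |v| ^ 2 * |v| ^ N := by gcongr
    _ = |v| ^ (N + 2) * ‖TT n α t ψ v‖ := by ring
    _ ≤ _ := hb t ht ht1 v
    _ ≤ _ := by gcongr

lemma schw {f : ℝ → ℂ} (hf : ContDiff ℝ (⊤ : ℕ∞) f) (hc : HasCompactSupport f) :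
    ∃ F : 𝓢(ℝ, ℂ), (F : ℝ → ℂ) = f := ⟨hc.toSchwartzMap hf, by ext; simp⟩

lemma poisson_GG {n : ℕ} {α t : ℝ} (ht : 0 < t) {ψ : ℝ → ℝ} (h : GoodCut ψ) (v : ℝ) :
    ∑' k : ℤ, GG n α t ψ k * ee (v * k) = ∑' m : ℤ, TT n α t ψ (v - m) := by
  have c1 : ContDiff ℝ (⊤ : ℕ∞) (fun y => GG n α t ψ y * ee (v * y)) :=
    (GG_contDiff n α t h).mul (ee_contDiff.comp (contDiff_const.mul contDiff_id))
  obtain ⟨F, hF⟩ := schw c1 (GG_hcs ht h).mul_right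
  have := SchwartzMap.tsum_eq_tsum_fourier F 0
  simp only [zero_add, hF, SchwartzMap.fourier_coe] at this
  rw [this]
  congr 1; ext m
  rw [ee_fourier]
  simp only [TT]
  simp
  congr 1; ext y
  rw [mul_assoc, ← ee_add]; congr 2; ring

lemma TT_schw {n : ℕ} {α t : ℝ} (ht : 0 < t) {ψ : ℝ → ℝ} (h : GoodCut ψ) :
    Integrable (TT n α t ψ) ∧ Continuous (TT n α t ψ) ∧ ∫ v, TT n α t ψ v = (ψ 0 : ℂ) * ee (t * 0 ^ n) := by
  obtain ⟨F, hF⟩ := schw (GG_contDiff n α t h) (GG_hcs ht h)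
  have e : TT n α t ψ = fun v => 𝓕 F (-v) := by
    ext v; rw [TT_eq, SchwartzMap.fourier_coe, hF]
  refine ⟨?_, ?_, ?_⟩
  · rw [e]; exact (𝓕 F).integrable.comp_neg
  · rw [e]; exact (𝓕 F).continuous.comp continuous_neg
  · have h1 : 𝓕⁻ (𝓕 F) = F := FourierTransform.fourierInv_fourier_eq F
    have h2 := congrArg (fun f : 𝓢(ℝ, ℂ) => f 0) h1
    simp only [SchwartzMap.fourierInv_coe] at h2
    rw [Real.fourierInv_eq] at h2
    simp [hF] at h2
    rw [e, integral_neg_eq_self (fun v => 𝓕 F v), h2]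
    simp [GG]

end

lemma poisson_bound (n : ℕ) {α : ℝ} (hα0 : 0 < α) (hα : 1 ≤ α * n) (hα2 : 0 < 1 - α * (n - 1)) {ψ : ℝ → ℝ} (h : GoodCut ψ) 
    {c : ℝ} (hc : 0 < c) :
    ∃ C : ℝ, 0 < C ∧ ∀ t, 0 < t → t ≤ 1 → ∀ v, |v| ≤ 1 - c →
      ‖∑' k : ℤ, GG n α t ψ k * ee (v * k) - TT n α t ψ v‖ ≤ C * t := by
  obtain ⟨C, hC, hb⟩ := TT_decay n hα0 hα hα2 h hc
  have hs : Summable fun m : ℤ => 1 / (m : ℝ) ^ 2 := Real.summable_one_div_int_pow.2 (by norm_num)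
  have hs0 : 0 ≤ ∑' m : ℤ, 1 / (m : ℝ) ^ 2 := tsum_nonneg fun m => by positivity
  refine ⟨C / c ^ 2 * (1 + ∑' m : ℤ, 1 / (m : ℝ) ^ 2), by positivity, fun t ht ht1 v hv => ?_⟩
  set f : ℤ → ℂ := fun m => TT n α t ψ (v - m) with hf
  set g : ℤ → ℂ := fun m => if m = 0 then 0 else f m with hg
  have hgb : ∀ m, ‖g m‖ ≤ C / c ^ 2 * t * (1 / (m : ℝ) ^ 2) := by
    intro m
    by_cases hm : m = 0
    · simp [hg, hm]
    · simp only [hg, hm, if_false, hf]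
      have h1 : (1:ℝ) ≤ |(m:ℝ)| := by exact_mod_cast Int.one_le_abs hm
      have hc1 : c ≤ 1 := by linarith [abs_nonneg v]
      have h2 : c * |(m:ℝ)| ≤ |v - m| := by
        have : |(m:ℝ)| - |v| ≤ |v - m| := by rw [abs_sub_comm]; exact abs_sub_abs_le_abs_sub _ _
        nlinarith
      have h3 : c ≤ |v - m| := by nlinarith
      refine (hb t ht ht1 _ h3).trans ?_
      rw [← sq_abs (v - m), ← sq_abs (m:ℝ)]
      calc C * t / |v - m| ^ 2 ≤ C * t / (c * |(m:ℝ)|) ^ 2 := by gcongr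
        _ = _ := by field_simp
  have hgs : Summable g := Summable.of_norm_bounded (hs.mul_left _) hgb
  have hfs : Summable f := by
    refine hgs.congr_cofinite ?_
    have : ∀ᶠ m : ℤ in cofinite, m ≠ 0 := (Set.finite_singleton (0:ℤ)).compl_mem_cofinite
    filter_upwards [this] with m hm
    simp [hg, hm]
  rw [poisson_GG ht h v, hfs.tsum_eq_add_tsum_ite 0]
  have e : f 0 = TT n α t ψ v := by simp [hf]
  rw [e, add_sub_cancel_left]
  have hfin := tsum_of_norm_bounded (hs.mul_left (C / c ^ 2 * t)).hasSum hgb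
  refine hfin.trans ?_
  rw [tsum_mul_left]
  have : 0 < C / c ^ 2 * t := by positivity
  nlinarith

lemma kern_integral (a b y : ℝ) (hy : y ≠ 0) :
    ∫ v in a..b, ee (v * y) = (ee (b * y) - ee (a * y)) / (2 * Real.pi * Complex.I * y) := by
  have hy' : (y : ℂ) ≠ 0 := by exact_mod_cast hy
  have hp : (2 * Real.pi * Complex.I : ℂ) ≠ 0 := by simp [Real.pi_ne_zero]
  have hd : ∀ v ∈ Set.uIcc a b, HasDerivAt (fun v : ℝ => ee (v * y) / (2 * Real.pi * Complex.I * y)) (ee (v * y)) v := by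
    intro v _
    have := ((ee_hasDerivAt (v * y)).scomp v ((hasDerivAt_id v).mul_const y)).div_const (2 * Real.pi * Complex.I * y)
    refine HasDerivAt.congr_deriv (f' := (1 * y) • (2 * Real.pi * Complex.I * ee (v * y)) / (2 * Real.pi * Complex.I * y)) this ?_
    rw [one_mul, Complex.real_smul]
    field_simp
  rw [intervalIntegral.integral_eq_sub_of_hasDerivAt hd]
  · ring
  · exact (ee_cont.comp (by fun_prop)).intervalIntegrable _ _

lemma ee_sub_sin (x : ℝ) : ee x - ee (-x) = 2 * Complex.I * Real.sin (2 * Real.pi * x) := by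
  unfold ee
  rw [show (2 * Real.pi * Complex.I * x : ℂ) = ((2 * Real.pi * x : ℝ) : ℂ) * Complex.I by push_cast; ring,
   show (2 * Real.pi * Complex.I * (-x : ℝ) : ℂ) = (-(2 * Real.pi * x : ℝ) : ℂ) * Complex.I by push_cast; ring]
  rw [Complex.exp_mul_I, Complex.exp_mul_I, Complex.cos_neg, Complex.sin_neg]
  push_cast; ring

lemma Ustar_eq {n : ℕ} (hn : 2 ≤ n) {α t γ σ : ℝ} (ht : 0 < t) {φ : ℝ → ℝ} (h : GoodCut φ) (h0 : φ 0 = 1) :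
    Ustar n γ φ α t (γ + σ) = ∫ v in σ..(2 * γ + σ), ∑' k : ℤ, GG n α t φ k * ee (v * k) := by
  obtain ⟨K, hK⟩ := exists_nat_ge (2 * t ^ (-α))
  set s : Finset ℤ := Finset.Icc (-(K:ℤ)) K with hs
  have hout : ∀ k : ℤ, k ∉ s → 2 * t ^ (-α) ≤ |(k:ℝ)| := by
    intro k hk
    refine hK.trans ?_
    have : (K:ℤ) ≤ |k| := by
      by_contra hlt
      push Not at hlt
      rw [abs_lt] at hlt
      exact hk (Finset.mem_Icc.2 ⟨hlt.1.le, hlt.2.le⟩)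
    exact_mod_cast this
  have hphi : ∀ k : ℤ, k ∉ s → φ (k * t ^ α) = 0 := by
    intro k hk
    have := GG_zero (n := n) ht h (hout k hk)
    unfold GG at this
    rcases mul_eq_zero.1 this with h1 | h1
    · exact_mod_cast h1
    · have := ee_norm (t * (k:ℝ)^n); rw [h1] at this; simp at this
  have e1 : ∀ v, ∑' k : ℤ, GG n α t φ k * ee (v * k) = ∑ k ∈ s, GG n α t φ k * ee (v * k) := by
    intro v
    apply tsum_eq_sum
    intro k hk; rw [GG_zero ht h (hout k hk), zero_mul]
  simp_rw [e1]
  rw [intervalIntegral.integral_finsetSum]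
  swap
  · intro k _
    exact (continuous_const.mul (ee_cont.comp (by fun_prop))).intervalIntegrable _ _
  unfold Ustar
  rw [tsum_eq_sum (s := s)]
  swap
  · intro k hk; rw [hphi k hk]; simp
  have h0s : (0:ℤ) ∈ s := by simp [hs]
  rw [← Finset.add_sum_erase s _ h0s, ← Finset.add_sum_erase s _ h0s]
  simp only [Int.cast_zero, mul_zero, div_zero, Complex.ofReal_zero, zero_mul, zero_add]
  have e0 : ∫ v in σ..(2 * γ + σ), GG n α t φ 0 * ee 0 = Complex.ofReal (2 * γ) := by
    have : GG n α t φ 0 = 1 := by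
      unfold GG; rw [zero_mul, h0, zero_pow (by omega), mul_zero, ee_zero]; simp
    rw [this, ee_zero]; simp
  rw [e0]
  congr 1
  rw [Finset.mul_sum]
  apply Finset.sum_congr rfl
  intro k hk
  have hk0 : k ≠ 0 := (Finset.mem_erase.1 hk).1
  have hkR : (k:ℝ) ≠ 0 := by exact_mod_cast hk0
  have hkC : (k:ℂ) ≠ 0 := by exact_mod_cast hk0
  rw [intervalIntegral.integral_const_mul, kern_integral _ _ _ hkR]
  have e2 : ee ((2 * γ + σ) * k) - ee (σ * k) = ee ((γ + σ) * k) * (2 * Complex.I * Real.sin (2 * Real.pi * γ * k)) := by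
    rw [mul_assoc (2 * Real.pi), ← ee_sub_sin, mul_sub, ← ee_add, ← ee_add]
    congr 2 <;> ring
  rw [e2, GG, ee_add]
  have hpi : (Real.pi : ℂ) ≠ 0 := by exact_mod_cast Real.pi_ne_zero
  push_cast
  field_simp

lemma fubini_TT {n : ℕ} {α t : ℝ} (ht : 0 < t) {ψ : ℝ → ℝ} (h : GoodCut ψ) (a b : ℝ) :
    ∫ v in a..b, TT n α t ψ v = ∫ y, GG n α t ψ y * ∫ v in a..b, ee (v * y) := by
  unfold TT
  rw [intervalIntegral_integral_swap]
  · congr 1; ext y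
    rw [intervalIntegral.integral_const_mul]
  · have h1 : Integrable (fun p : ℝ × ℝ => (1 : ℂ) * GG n α t ψ p.2) ((volume.restrict (Set.uIoc a b)).prod volume) := by
      apply Integrable.mul_prod (f := fun _ => (1:ℂ)) (g := GG n α t ψ)
      · have : IsFiniteMeasure (volume.restrict (Set.uIoc a b)) := ⟨by simp [Set.uIoc]⟩
        exact integrable_const _
      · exact GG_integrable ht h
    have h2 := h1.bdd_mul (c := 1) (f := fun p : ℝ × ℝ => ee (p.1 * p.2)) 
      ((ee_cont.comp (by fun_prop)).aestronglyMeasurable) (ae_of_all _ fun p => by rw [ee_norm])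
    refine h2.congr (ae_of_all _ fun p => ?_)
    simp [Function.uncurry]; ring

lemma half_TT {n : ℕ} (hn : 2 ≤ n) (hne : Even n) {α : ℝ} (hα0 : 0 < α) (hα : 1 ≤ α * n) (hα2 : 0 < 1 - α * (n - 1)) {ψ : ℝ → ℝ} (h : GoodCut ψ)
    (h0 : ψ 0 = 1) (hev : ∀ x, ψ (-x) = ψ x)
    {c : ℝ} (hc : 0 < c) :
    ∃ C : ℝ, 0 < C ∧ ∀ t, 0 < t → t ≤ 1 → 
      (∀ v, TT n α t ψ (-v) = TT n α t ψ v) ∧ ∀ θ, c ≤ θ →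
      ‖(∫ v in (0:ℝ)..θ, TT n α t ψ v) - 1 / 2‖ ≤ C * t := by
  obtain ⟨C, hC, hb⟩ := TT_decay n hα0 hα hα2 h hc
  refine ⟨C / c, by positivity, fun t ht ht1 => ?_⟩
  obtain ⟨hi, hcont, hint⟩ := TT_schw (n := n) (α := α) ht h
  have hT : ∀ v, TT n α t ψ (-v) = TT n α t ψ v := by
    intro v
    unfold TT
    rw [← integral_neg_eq_self]
    congr 1; ext y
    simp [GG, hev, hne.neg_pow]
  refine ⟨hT, fun θ hθ => ?_⟩
  have hI : ∫ v in Set.Ioi 0, TT n α t ψ v = 1 / 2 := by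
    have h1 := intervalIntegral.integral_Iic_add_Ioi (b := 0) hi.integrableOn hi.integrableOn
    rw [hint] at h1
    have h2 : ∫ v in Set.Iic (0:ℝ), TT n α t ψ v = ∫ v in Set.Ioi 0, TT n α t ψ v := by
      have := integral_comp_neg_Iic (0:ℝ) (TT n α t ψ)
      simp only [hT, neg_zero] at this
      exact this
    rw [h2, h0, zero_pow (by omega), mul_zero, ee_zero] at h1
    simp at h1
    linear_combination h1 / 2
  have h3 := intervalIntegral.integral_Ioi_sub_Ioi (a := 0) (b := θ) hi.integrableOn (hc.le.trans hθ)
  rw [hI] at h3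
  rw [← h3]
  have h4 : ‖∫ v in Set.Ioi θ, TT n α t ψ v‖ ≤ C / c * t := by
    have hθ0 : 0 < θ := hc.trans_le hθ
    have h5 : ‖∫ v in Set.Ioi θ, TT n α t ψ v‖ ≤ ∫ v in Set.Ioi θ, C * t * v ^ (-2 : ℝ) := by
      apply norm_integral_le_of_norm_le
      · exact (integrableOn_Ioi_rpow_of_lt (by norm_num) hθ0).const_mul _
      · refine (ae_restrict_iff' measurableSet_Ioi).2 (ae_of_all _ fun v hv => ?_)
        have hv' : θ < v := hv
        refine (hb t ht ht1 v (by rw [abs_of_pos (by linarith)]; linarith)).trans (le_of_eq ?_)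
        rw [Real.rpow_neg (by linarith)]
        norm_cast
    refine h5.trans ?_
    rw [integral_const_mul, integral_Ioi_rpow_of_lt (by norm_num) hθ0]
    norm_num
    rw [Real.rpow_neg_one, div_mul_eq_mul_div, div_eq_mul_inv]
    gcongr
  rw [sub_sub_cancel_left, norm_neg]
  exact h4

lemma vdc {n : ℕ} (hn : 2 ≤ n) {S C A s : ℝ} (hC : 0 ≤ C) (hA1 : 1 ≤ A) (hAS : S ≤ A)
    (hs : |s| ≤ S) (q q' : ℝ → ℝ) (hq : ∀ u, HasDerivAt q (q' u) u) (hq' : Continuous q')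
    (hqA : q A = 0) (hb : ∀ u, A ≤ u → |q u| ≤ C) (hb' : ∀ u, A ≤ u → |q' u| ≤ C / u) :
    ∃ L : ℂ, Tendsto (fun R : ℝ => ∫ u in A..R, ((q u / u : ℝ) : ℂ) * ee (u ^ n + s * u)) atTop (nhds L)
      ∧ ‖L‖ ≤ C * (n ^ 2 + 2) / A ^ n := by
  have hqc : Continuous q := continuous_iff_continuousAt.2 fun u => (hq u).continuousAt
  set D : ℝ → ℝ := fun u => n * u ^ n + s * u with hD
  set D' : ℝ → ℝ := fun u => n * (n * u ^ (n - 1)) + s with hD'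
  have hDd : ∀ u, HasDerivAt D (D' u) u := by
    intro u
    have h1 := ((hasDerivAt_pow n u).const_mul (n:ℝ)).add ((hasDerivAt_id u).const_mul s)
    refine HasDerivAt.congr_deriv h1 ?_
    simp [hD']
  have hDc : Continuous D := by fun_prop
  have hDc' : Continuous D' := by fun_prop
  have hn2 : (2:ℝ) ≤ n := by exact_mod_cast hn
  have hsu : ∀ u, A ≤ u → |s| ≤ u ^ (n - 1) := by
    intro u hu
    have : u ≤ u ^ (n - 1) := le_self_pow₀ (by linarith) (by omega)
    linarith
  have hpow : ∀ u : ℝ, u ^ n = u ^ (n - 1) * u := by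
    intro u; rw [← pow_succ]; congr 1; omega
  have hDlow : ∀ u, A ≤ u → u ^ n ≤ D u := by
    intro u hu
    have hu0 : 0 < u := by linarith
    have h1 := abs_le.1 (hsu u hu)
    have h2 : 0 < u ^ n := by positivity
    have h3 : -(u ^ n) ≤ s * u := by rw [hpow]; nlinarith [h1.1]
    simp only [hD]; nlinarith
  have hDpos : ∀ u, A ≤ u → 0 < D u := fun u hu => by
    have : 0 < u := by linarith
    exact lt_of_lt_of_le (by positivity) (hDlow u hu)
  have hDup : ∀ u, A ≤ u → |D' u| ≤ (n ^ 2 + 1) * u ^ (n - 1) := by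
    intro u hu
    have hu0 : 0 < u := by linarith
    simp only [hD']
    calc |n * (n * u ^ (n - 1)) + s| ≤ |n * (n * u ^ (n - 1))| + |s| := abs_add_le _ _
      _ ≤ n * (n * u ^ (n - 1)) + u ^ (n - 1) := by
        rw [abs_of_nonneg (by positivity)]; gcongr; exact hsu u hu
      _ = _ := by ring
  set f : ℝ → ℝ := fun u => q u / D u with hf
  set f' : ℝ → ℝ := fun u => (q' u * D u - q u * D' u) / D u ^ 2 with hf'
  have hfd : ∀ u, A ≤ u → HasDerivAt f (f' u) u := fun u hu => (hq u).div (hDd u) (hDpos u hu).ne'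
  have hfb : ∀ u, A ≤ u → |f' u| ≤ C * (n ^ 2 + 2) * u ^ (-(n + 1 : ℝ)) := by
    intro u hu
    have hu0 : 0 < u := by linarith
    have hDp := hDpos u hu
    have e : f' u = q' u / D u - q u * D' u / D u ^ 2 := by
      simp only [hf']; field_simp
    rw [e]
    have e1 : |q' u / D u| ≤ (C / u) / u ^ n := by
      rw [abs_div, abs_of_pos hDp]; gcongr
      · exact hb' u hu
      · exact hDlow u hu
    have e2 : |q u * D' u / D u ^ 2| ≤ C * ((n ^ 2 + 1) * u ^ (n - 1)) / (u ^ n) ^ 2 := by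
      rw [abs_div, abs_mul, abs_of_pos (by positivity : 0 < D u ^ 2)]; gcongr
      · exact hb u hu
      · exact hDup u hu
      · exact hDlow u hu
    have e3 : u ^ (-(n + 1 : ℝ)) = 1 / u ^ (n + 1) := by
      rw [Real.rpow_neg hu0.le]; norm_cast; simp
    calc _ ≤ |q' u / D u| + |q u * D' u / D u ^ 2| := abs_sub _ _
      _ ≤ (C / u) / u ^ n + C * ((n ^ 2 + 1) * u ^ (n - 1)) / (u ^ n) ^ 2 := add_le_add e1 e2
      _ = _ := by
        have hw : u ^ (n - 1) ≠ 0 := by positivity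
        rw [e3, pow_succ u n, hpow u]
        generalize u ^ (n - 1) = w at hw ⊢
        field_simp; ring
  set p : ℝ → ℂ := fun u => ee (u ^ n + s * u) with hp
  have hpc : Continuous p := ee_cont.comp (by fun_prop)
  have hpd : ∀ u, HasDerivAt p ((n * u ^ (n - 1) + s : ℝ) * (2 * Real.pi * Complex.I * p u)) u := by
    intro u
    have h1 : HasDerivAt (fun u : ℝ => u ^ n + s * u) (n * u ^ (n - 1) + s) u := by
      refine HasDerivAt.congr_deriv ((hasDerivAt_pow n u).add ((hasDerivAt_id u).const_mul s)) ?_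
      simp
    have := (ee_hasDerivAt (u ^ n + s * u)).scomp u h1
    exact this
  have hpn : ∀ u, ‖p u‖ = 1 := fun u => ee_norm _
  have h2pi : (2 * Real.pi * Complex.I : ℂ) ≠ 0 := by simp [Real.pi_ne_zero]
  have hfc' : ContinuousOn f' (Set.Ici A) := by
    apply ContinuousOn.div
    · fun_prop
    · fun_prop
    · intro u hu; exact (pow_pos (hDpos u hu) 2).ne'
  have hA0 : 0 < A := by linarith
  have hint : IntegrableOn (fun u => (f' u : ℂ) * p u) (Set.Ioi A) := by
    refine Integrable.mono' (g := fun u => C * (n ^ 2 + 2) * u ^ (-(n + 1 : ℝ))) ?_ ?_ ?_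
    · exact (integrableOn_Ioi_rpow_of_lt (by linarith) hA0).const_mul _
    · apply ContinuousOn.aestronglyMeasurable _ measurableSet_Ioi
      apply ContinuousOn.mul
      · exact Complex.continuous_ofReal.comp_continuousOn (hfc'.mono Set.Ioi_subset_Ici_self)
      · exact hpc.continuousOn
    · refine (ae_restrict_iff' measurableSet_Ioi).2 (ae_of_all _ fun u hu => ?_)
      rw [norm_mul, hpn, mul_one, Complex.norm_real]
      exact hfb u (le_of_lt hu)
  have hby : ∀ R, A ≤ R → ∫ u in A..R, ((q u / u : ℝ) : ℂ) * ee (u ^ n + s * u) =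
      (1 / (2 * Real.pi * Complex.I)) * ((f R : ℂ) * p R - ∫ u in A..R, (f' u : ℂ) * p u) := by
    intro R hR
    have huI : Set.uIcc A R = Set.Icc A R := Set.uIcc_of_le hR
    have h1 := intervalIntegral.integral_mul_deriv_eq_deriv_mul (a := A) (b := R)
      (u := fun u => (f u : ℂ)) (u' := fun u => (f' u : ℂ)) (v := p) 
      (v' := fun u => (n * u ^ (n - 1) + s : ℝ) * (2 * Real.pi * Complex.I * p u))
      (fun u hu => (hfd u (by rw [huI] at hu; exact hu.1)).ofReal_comp) (fun u _ => hpd u)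
      (by
        apply ContinuousOn.intervalIntegrable
        rw [huI]
        exact Complex.continuous_ofReal.comp_continuousOn (hfc'.mono Set.Icc_subset_Ici_self))
      (by 
        apply Continuous.intervalIntegrable
        apply Continuous.mul
        · exact Complex.continuous_ofReal.comp (by fun_prop)
        · exact continuous_const.mul hpc)
    have h2 : ∫ u in A..R, ((q u / u : ℝ) : ℂ) * ee (u ^ n + s * u) = 
      (1 / (2 * Real.pi * Complex.I)) * ∫ u in A..R, (f u : ℂ) * ((n * u ^ (n - 1) + s : ℝ) * (2 * Real.pi * Complex.I * p u)) := by
      rw [← intervalIntegral.integral_const_mul]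
      apply intervalIntegral.integral_congr
      intro u hu
      rw [huI] at hu
      have hu0 : u ≠ 0 := by have := hu.1; intro h; linarith
      have hDp := (hDpos u hu.1).ne'
      have e : q u / u = f u * (n * u ^ (n - 1) + s) := by
        have : D u = (n * u ^ (n - 1) + s) * u := by simp only [hD]; rw [hpow]; ring
        simp only [hf]
        rw [this] at hDp ⊢
        have h3 := left_ne_zero_of_mul hDp
        field_simp
      simp only
      rw [e, Complex.ofReal_mul]
      field_simp
      rfl
    rw [h2, h1]
    have : f A = 0 := by simp [hf, hqA]
    simp [this]
  refine ⟨(1 / (2 * Real.pi * Complex.I)) * (0 - ∫ u in Set.Ioi A, (f' u : ℂ) * p u), ?_, ?_⟩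
  · have hfR : Tendsto (fun R => (f R : ℂ) * p R) atTop (nhds 0) := by
      apply squeeze_zero_norm' (a := fun R => C / R)
      · filter_upwards [eventually_ge_atTop A] with R hR
        have hR1 : 1 ≤ R := by linarith
        rw [norm_mul, hpn, mul_one, Complex.norm_real, Real.norm_eq_abs]
        simp only [hf]
        rw [abs_div, abs_of_pos (hDpos R hR)]
        gcongr
        · exact hb R hR
        · exact (le_self_pow₀ hR1 (by omega)).trans (hDlow R hR)
      · exact tendsto_const_nhds.div_atTop tendsto_id
    have hI := intervalIntegral_tendsto_integral_Ioi A hint tendsto_id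
    refine ((hfR.sub hI).const_mul _).congr' ?_
    filter_upwards [eventually_ge_atTop A] with R hR
    rw [hby R hR]; rfl
  · have h1 : ‖∫ u in Set.Ioi A, (f' u : ℂ) * p u‖ ≤ C * (n ^ 2 + 2) / A ^ n := by
      have h5 : ‖∫ u in Set.Ioi A, (f' u : ℂ) * p u‖ ≤ ∫ u in Set.Ioi A, C * (n ^ 2 + 2) * u ^ (-(n + 1 : ℝ)) := by
        apply norm_integral_le_of_norm_le
        · exact (integrableOn_Ioi_rpow_of_lt (by linarith) hA0).const_mul _
        · refine (ae_restrict_iff' measurableSet_Ioi).2 (ae_of_all _ fun u hu => ?_)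
          rw [norm_mul, hpn, mul_one, Complex.norm_real]
          exact hfb u (le_of_lt hu)
      refine h5.trans ?_
      rw [integral_const_mul, integral_Ioi_rpow_of_lt (by linarith) hA0, div_eq_mul_inv (C * _)]
      have e : -A ^ (-(n + 1 : ℝ) + 1) / (-(n + 1 : ℝ) + 1) = (A ^ n)⁻¹ / n := by
        rw [show (-(n + 1 : ℝ) + 1) = -(n : ℝ) by ring, Real.rpow_neg hA0.le, Real.rpow_natCast, neg_div_neg_eq]
      rw [e]
      gcongr
      apply div_le_self (by positivity) (by linarith)
    rw [zero_sub, norm_mul, norm_neg]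
    have h2 : ‖(1 / (2 * Real.pi * Complex.I) : ℂ)‖ ≤ 1 := by
      simp [abs_of_pos Real.pi_pos]
      have := Real.pi_gt_three
      have h3 : Real.pi⁻¹ ≤ 1 := inv_le_one_of_one_le₀ (by linarith)
      have h4 : 0 < Real.pi⁻¹ := by positivity
      linarith
    calc _ ≤ 1 * (C * (n ^ 2 + 2) / A ^ n) := by gcongr
      _ = _ := one_mul _

lemma vdc_scaled {n : ℕ} (hn : 2 ≤ n) {S B : ℝ} (hB : 0 ≤ B) (ρ : ℝ → ℝ) 
    (hρ : ContDiff ℝ (⊤ : ℕ∞) ρ) (h12 : ρ (1 / 2) = 0) (hb : ∀ z, |ρ z| ≤ B) (hb' : ∀ z, |z * deriv ρ z| ≤ B)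
    {δ s : ℝ} (hδ : 0 < δ) (hδ1 : 1 ≤ 1 / (2 * δ)) (hδS : S ≤ 1 / (2 * δ)) (hs : |s| ≤ S) :
    ∃ L : ℂ, Tendsto (fun R : ℝ => ∫ u in (1 / (2 * δ))..R, ((ρ (δ * u) / u : ℝ) : ℂ) * ee (u ^ n + s * u)) atTop (nhds L)
      ∧ ‖L‖ ≤ B * (n ^ 2 + 2) * (2 * δ) ^ n := by
  have hd : Differentiable ℝ ρ := hρ.differentiable (by simp)
  have key := vdc hn hB hδ1 hδS hs (fun u => ρ (δ * u)) (fun u => δ * deriv ρ (δ * u)) ?_ ?_ ?_ ?_ ?_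
  · obtain ⟨L, h1, h2⟩ := key
    refine ⟨L, h1, h2.trans (le_of_eq ?_)⟩
    rw [one_div, inv_pow, div_inv_eq_mul]
  · intro u
    have := (hd (δ * u)).hasDerivAt.scomp u ((hasDerivAt_id u).const_mul δ)
    refine HasDerivAt.congr_deriv this ?_
    simp
  · have : Continuous (deriv ρ) := hρ.continuous_deriv (by simp)
    fun_prop
  · show ρ (δ * (1 / (2 * δ))) = 0
    rw [← h12]; congr 1; field_simp
  · intro u _; exact hb _
  · intro u hu
    have hu0 : 0 < u := by linarith
    rw [le_div_iff₀ hu0]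
    have := hb' (δ * u)
    calc |δ * deriv ρ (δ * u)| * u = |δ * u * deriv ρ (δ * u)| := by
          rw [abs_mul, abs_mul, abs_mul, abs_of_pos hu0]; ring
      _ ≤ _ := this

lemma cut_bounds {ψ : ℝ → ℝ} (h : GoodCut ψ) : ∃ B : ℝ, 1 ≤ B ∧ (∀ z, |ψ z| ≤ B) ∧ ∀ z, |z * deriv ψ z| ≤ B := by
  obtain ⟨C, hC1, hC⟩ := psi_iter_bound h 1
  refine ⟨2 * C, by linarith, fun z => ?_, fun z => ?_⟩
  · have := hC 0 (by norm_num) z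
    simp at this
    linarith
  · have h1 := hC 1 le_rfl z
    rw [iteratedDeriv_one, Real.norm_eq_abs] at h1
    rw [abs_mul]
    by_cases hz : |z| ≤ 2
    · gcongr
    · push Not at hz
      have : ψ =ᶠ[nhds z] fun _ => 0 := by
        have : ∀ᶠ w in nhds z, 2 < |w| := (continuous_abs.tendsto z).eventually (lt_mem_nhds hz)
        filter_upwards [this] with w hw using h.supp w hw.le
      rw [this.deriv_eq]
      simp; linarith

lemma fold_integral (h : ℝ → ℂ) (hc : Continuous h) {A R : ℝ} (h0 : ∀ u, |u| < A → h u = 0) (hA : 0 ≤ A) :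
    ∫ u in (-R)..R, h u = ∫ u in A..R, (h u + h (-u)) := by
  have hi : ∀ a b, IntervalIntegrable h volume a b := fun a b => hc.intervalIntegrable a b
  have hi' : ∀ a b, IntervalIntegrable (fun u => h (-u)) volume a b := fun a b => (hc.comp continuous_neg).intervalIntegrable a b
  rw [intervalIntegral.integral_add (hi _ _) (hi' _ _), intervalIntegral.integral_comp_neg]
  have h1 : ∫ u in (-A)..A, h u = 0 := by
    rw [intervalIntegral.integral_of_le (by linarith), integral_Ioc_eq_integral_Ioo]
    exact setIntegral_eq_zero_of_forall_eq_zero fun u hu => h0 u (abs_lt.2 hu)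
  have h2 := intervalIntegral.integral_add_adjacent_intervals (hi (-R) (-A)) (hi (-A) A)
  have h3 := intervalIntegral.integral_add_adjacent_intervals (hi (-R) A) (hi A R)
  rw [← h3, ← h2, h1]; ring

noncomputable def kerS (s u : ℝ) : ℂ := ∫ v in (-s)..s, ee (v * u)

lemma kerS_cont (s : ℝ) : Continuous (kerS s) := by
  unfold kerS
  apply intervalIntegral.continuous_parametric_intervalIntegral_of_continuous'
  exact ee_cont.comp (by fun_prop)

lemma kerS_neg (s u : ℝ) : kerS s (-u) = kerS s u := by
  unfold kerS
  have := intervalIntegral.integral_comp_neg (a := -s) (b := s) (fun v => ee (v * u))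
  simp only [neg_neg] at this
  rw [← this]
  simp

lemma kerS_ne (s u : ℝ) (hu : u ≠ 0) : kerS s u = (ee (s * u) - ee (-s * u)) / (2 * Real.pi * Complex.I * u) :=
  kern_integral _ _ _ hu

lemma kerS_scale (s a u : ℝ) : kerS (s * a) u = a * kerS s (a * u) := by
  unfold kerS
  have := intervalIntegral.smul_integral_comp_mul_left (a := -s) (b := s) (fun v => ee (v * u)) a
  have h2 : ∀ v, ee (a * v * u) = ee (v * (a * u)) := fun v => by congr 1; ring
  simp only [h2] at this
  rw [show a * -s = -(s * a) by ring, mul_comm a s] at this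
  rw [← this, Complex.real_smul]

lemma Iint_eq {n : ℕ} (s R : ℝ) :
    Complex.ofReal (1 / (2 * Real.pi)) * Iint n s R = ∫ u in (-R)..R, ee (u ^ n) * kerS s u / 2 := by
  unfold Iint
  rw [← intervalIntegral.integral_const_mul]
  apply intervalIntegral.integral_congr_ae
  have : ∀ᵐ u : ℝ, u ≠ 0 := by simp [ae_iff]
  filter_upwards [this] with u hu _
  rw [if_neg hu, kerS_ne _ _ hu, neg_mul, ee_sub_sin]
  have hpi : (Real.pi : ℂ) ≠ 0 := by exact_mod_cast Real.pi_ne_zero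
  have hu' : (u : ℂ) ≠ 0 := by exact_mod_cast hu
  rw [← mul_assoc]
  push_cast
  field_simp

lemma scale_pow {n : ℕ} (hn : 2 ≤ n) {t : ℝ} (ht : 0 < t) (y : ℝ) : (t ^ ((n:ℝ)⁻¹) * y) ^ n = t * y ^ n := by
  rw [mul_pow, Real.rpow_inv_natCast_pow ht.le (by omega)]

lemma scale_delta {α t : ℝ} {n : ℕ} (ht : 0 < t) (y : ℝ) : t ^ (α - (n:ℝ)⁻¹) * (t ^ ((n:ℝ)⁻¹) * y) = y * t ^ α := by
  rw [← mul_assoc, ← Real.rpow_add ht, sub_add_cancel, mul_comm]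

lemma integral_cut {g : ℝ → ℂ} {R : ℝ} (hR : 0 ≤ R) (h : ∀ u, R ≤ |u| → g u = 0) : ∫ u, g u = ∫ u in (-R)..R, g u := by
  rw [intervalIntegral.integral_of_le (by linarith), setIntegral_eq_integral_of_forall_compl_eq_zero]
  intro u hu
  apply h
  by_contra hc
  push Not at hc
  rw [abs_lt] at hc
  exact hu ⟨hc.1, hc.2.le⟩

lemma even_main {n : ℕ} (hn : 2 ≤ n) (hne : Even n) {α : ℝ} {ψ : ℝ → ℝ} (h : GoodCut ψ) (h1 : ∀ x, |x| ≤ 1 / 2 → ψ x = 1)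
    (hev : ∀ x, ψ (-x) = ψ x) (S : ℝ) :
    ∃ C : ℝ, 0 < C ∧ ∀ t δ : ℝ, 0 < t → δ = t ^ (α - (n:ℝ)⁻¹) → 1 ≤ 1 / (2 * δ) → S ≤ 1 / (2 * δ) →
      (∀ v, TT n α t ψ (-v) = TT n α t ψ v) → 
      ∀ s, |s| ≤ S → ∃ Is : ℂ, 
        Tendsto (fun R : ℝ => Complex.ofReal (1 / (2 * Real.pi)) * Iint n s R) atTop (nhds Is) ∧
        ‖(∫ v in (0:ℝ)..(s * t ^ ((n:ℝ)⁻¹)), TT n α t ψ v) - Is‖ ≤ C * δ ^ n := by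
  obtain ⟨B, hB1, hB, hB'⟩ := cut_bounds h
  refine ⟨2 * ((B + 1) * (n ^ 2 + 2) * 2 ^ n), by positivity, ?_⟩
  intro t δ ht hδ hδ1 hδS hT s hs
  have hδ0 : 0 < δ := by rw [hδ]; positivity
  set a := t ^ ((n:ℝ)⁻¹) with ha
  have ha0 : 0 < a := by positivity
  set A := 1 / (2 * δ) with hA
  have hρ : ContDiff ℝ (⊤ : ℕ∞) (fun z => 1 - ψ z) := contDiff_const.sub h.smooth
  have hρb : ∀ z, |1 - ψ z| ≤ B + 1 := fun z => by
    have := abs_sub 1 (ψ z); have := hB z; simp at *; linarith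
  have hρb' : ∀ z, |z * deriv (fun z => 1 - ψ z) z| ≤ B + 1 := fun z => by
    rw [deriv_const_sub, mul_neg, abs_neg]; linarith [hB' z]
  obtain ⟨L₁, hL1, hL1b⟩ := vdc_scaled hn (by linarith : 0 ≤ B + 1) _ hρ 
    (by show 1 - ψ (1/2) = 0; rw [h1 _ (by rw [abs_of_pos] <;> norm_num)]; norm_num) hρb hρb' hδ0 hδ1 hδS hs
  obtain ⟨L₂, hL2, hL2b⟩ := vdc_scaled hn (by linarith : 0 ≤ B + 1) _ hρ 
    (by show 1 - ψ (1/2) = 0; rw [h1 _ (by rw [abs_of_pos] <;> norm_num)]; norm_num) hρb hρb' hδ0 hδ1 hδS ((abs_neg s).trans_le hs)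
  have hp2 : ‖(1 / (2 * Real.pi * Complex.I) : ℂ)‖ ≤ 1 := by
    simp [abs_of_pos Real.pi_pos]
    have := Real.pi_gt_three
    have h3 : Real.pi⁻¹ ≤ 1 := inv_le_one_of_one_le₀ (by linarith)
    have h4 : 0 < Real.pi⁻¹ := by positivity
    linarith
  set E : ℝ → ℂ := fun u => ee (u ^ n) * kerS s u / 2 with hE
  have hEc : Continuous E := ((ee_cont.comp (by fun_prop)).mul (kerS_cont s)).div_const _
  have hEn : ∀ u, E (-u) = E u := fun u => by simp only [hE, kerS_neg, hne.neg_pow]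
  have hψc : Continuous fun u => (ψ (δ * u) : ℂ) := 
    Complex.continuous_ofReal.comp (h.smooth.continuous.comp (by fun_prop))
  have hJ : (∫ v in (0:ℝ)..(s * a), TT n α t ψ v) = ∫ u, (ψ (δ * u) : ℂ) * E u := by
    have hcont := (TT_schw (n := n) (α := α) ht h).2.1
    have e1 : ∫ v in (-(s * a))..(s * a), TT n α t ψ v = 2 * ∫ v in (0:ℝ)..(s * a), TT n α t ψ v := by
      rw [fold_integral _ hcont (A := 0) ?_ le_rfl]
      · simp only [hT, ← two_mul]
        rw [intervalIntegral.integral_const_mul]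
      · exact fun u hu => absurd hu (not_lt.2 (abs_nonneg u))
    have e2 : ∫ v in (-(s * a))..(s * a), TT n α t ψ v = 2 * ∫ u, (ψ (δ * u) : ℂ) * E u := by
      rw [fubini_TT ht h]
      have := Measure.integral_comp_mul_left (fun u => (ψ (δ * u) : ℂ) * E u) a
      rw [abs_of_pos (by positivity : 0 < a⁻¹), eq_inv_smul_iff₀ ha0.ne'] at this
      rw [← this, Complex.real_smul, ← integral_const_mul, ← integral_const_mul]
      congr 1; ext y
      rw [show ∫ v in (-(s * a))..(s * a), ee (v * y) = kerS (s * a) y from rfl, kerS_scale]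
      simp only [hE, GG]
      rw [hδ, ha, scale_delta ht, scale_pow hn ht]
      ring
    have := e1.symm.trans e2
    exact mul_left_cancel₀ two_ne_zero this
  refine ⟨(∫ u, (ψ (δ * u) : ℂ) * E u) + (1 / (2 * Real.pi * Complex.I)) * (L₁ - L₂), ?_, ?_⟩
  · have := ((hL1.sub hL2).const_mul (1 / (2 * Real.pi * Complex.I) : ℂ)).const_add (∫ u, (ψ (δ * u) : ℂ) * E u)
    refine this.congr' ?_
    filter_upwards [eventually_ge_atTop (2 / δ), eventually_ge_atTop A] with R hR hRA
    have hR0 : 0 ≤ R := le_trans (by positivity) hR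
    rw [Iint_eq, integral_cut hR0 (g := fun u => (ψ (δ * u) : ℂ) * E u)]
    swap
    · intro u hu
      rw [h.supp]; · simp
      rw [abs_mul, abs_of_pos hδ0]
      have := (div_le_iff₀ hδ0).1 (hR.trans hu)
      linarith
    have e3 : ∫ u in (-R)..R, (1 - (ψ (δ * u) : ℂ)) * E u = 
      (1 / (2 * Real.pi * Complex.I)) * ((∫ u in A..R, (((1 - ψ (δ * u)) / u : ℝ) : ℂ) * ee (u ^ n + s * u)) -
        ∫ u in A..R, (((1 - ψ (δ * u)) / u : ℝ) : ℂ) * ee (u ^ n + -s * u)) := by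
      rw [fold_integral (fun u => (1 - (ψ (δ*u):ℂ)) * E u) (by exact (continuous_const.sub hψc).mul hEc) (A := A) ?_ (by positivity)]
      · rw [← intervalIntegral.integral_sub, ← intervalIntegral.integral_const_mul]
        · apply intervalIntegral.integral_congr
          intro u hu
          rw [Set.uIcc_of_le hRA] at hu
          have hu0 : u ≠ 0 := by have := hu.1; intro h; linarith
          have hu' : (u : ℂ) ≠ 0 := by exact_mod_cast hu0
          have hpi : (Real.pi : ℂ) ≠ 0 := by exact_mod_cast Real.pi_ne_zero
          simp only
          rw [hEn, mul_neg, hev, ← add_mul, ee_add, ee_add]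
          simp only [hE]
          rw [kerS_ne _ _ hu0]
          push_cast
          field_simp
          ring
        all_goals
          apply ContinuousOn.intervalIntegrable
          rw [Set.uIcc_of_le hRA]
          apply ContinuousOn.mul
          · apply Complex.continuous_ofReal.comp_continuousOn
            apply ContinuousOn.div
            · exact (continuous_const.sub (h.smooth.continuous.comp (by fun_prop))).continuousOn
            · fun_prop
            · intro u hu; have := hu.1; intro h; linarith
          · exact (ee_cont.comp (by fun_prop)).continuousOn
      · intro u hu
        rw [h1]; · simp
        rw [abs_mul, abs_of_pos hδ0]
        calc δ * |u| ≤ δ * A := by have := hu.le; gcongr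
          _ = 1 / 2 := by rw [hA]; field_simp
    rw [← e3, ← intervalIntegral.integral_add]
    · congr 1; ext u; simp only [hE]; ring
    · exact (hψc.mul hEc).intervalIntegrable _ _
    · exact ((continuous_const.sub hψc).mul hEc).intervalIntegrable _ _
  · rw [hJ, sub_add_cancel_left, norm_neg, norm_mul]
    rw [mul_pow] at hL1b hL2b
    calc _ ≤ 1 * (‖L₁‖ + ‖L₂‖) := by gcongr; exact norm_sub_le _ _
      _ ≤ _ := by nlinarith

lemma chi_good {ψ : ℝ → ℝ} (h : GoodCut ψ) (h1 : ∀ x, |x| ≤ 1 / 2 → ψ x = 0) : GoodCut (fun z => ψ z / z) := by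
  refine ⟨?_, fun x hx => by simp only [h.supp x hx, zero_div]⟩
  rw [contDiff_iff_contDiffAt]
  intro x
  by_cases hx : x = 0
  · subst hx
    have : (fun z => ψ z / z) =ᶠ[nhds 0] fun _ => 0 := by
      have : ∀ᶠ z : ℝ in nhds 0, |z| < 1 / 2 :=
        (continuous_abs.tendsto (0:ℝ)).eventually (gt_mem_nhds (by norm_num))
      filter_upwards [this] with z hz
      rw [h1 z hz.le, zero_div]
    exact contDiffAt_const.congr_of_eventuallyEq this
  · exact h.smooth.contDiffAt.div contDiffAt_id hx

lemma odd_ftc {n : ℕ} {α t : ℝ} (ht : 0 < t) {ψ : ℝ → ℝ} (h : GoodCut ψ) (h1 : ∀ x, |x| ≤ 1 / 2 → ψ x = 0) (a b : ℝ) :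
    ∫ v in a..b, TT n α t ψ v = (t ^ α : ℝ) / (2 * Real.pi * Complex.I) * 
      (TT n α t (fun z => ψ z / z) b - TT n α t (fun z => ψ z / z) a) := by
  have hg := chi_good h h1
  have hi : ∀ v : ℝ, Integrable fun y => GG n α t (fun z => ψ z / z) y * ee (v * y) := by
    intro v
    apply Continuous.integrable_of_hasCompactSupport
    · exact (GG_contDiff n α t hg).continuous.mul (ee_cont.comp (by fun_prop))
    · exact (GG_hcs ht hg).mul_right
  rw [fubini_TT ht h]
  unfold TT
  rw [← integral_sub (hi _) (hi _), ← integral_const_mul]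
  congr 1; ext y
  have hta : (t ^ α : ℝ) ≠ 0 := by positivity
  by_cases hy : y = 0
  · subst hy
    have : ψ 0 = 0 := h1 0 (by norm_num)
    simp [GG, this]
  · rw [kern_integral _ _ _ hy]
    have hy' : (y : ℂ) ≠ 0 := by exact_mod_cast hy
    have hpi : (Real.pi : ℂ) ≠ 0 := by exact_mod_cast Real.pi_ne_zero
    have hta' : ((t ^ α : ℝ) : ℂ) ≠ 0 := by exact_mod_cast hta
    unfold GG
    push_cast [-Complex.ofReal_cpow]
    field_simp

lemma odd_main {n : ℕ} (hn : 2 ≤ n) (hne : Even n) {α : ℝ} (hα0 : 0 < α) (hα : 1 ≤ α * n) (hα2 : 0 < 1 - α * (n - 1))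
    {ψ : ℝ → ℝ} (h : GoodCut ψ) (h1 : ∀ x, |x| ≤ 1 / 2 → ψ x = 0)
    (hodd : ∀ x, ψ (-x) = - ψ x) (S : ℝ) {c : ℝ} (hc : 0 < c) :
    ∃ C : ℝ, 0 < C ∧ ∀ t δ : ℝ, 0 < t → t ≤ 1 → δ = t ^ (α - (n:ℝ)⁻¹) → 1 ≤ 1 / (2 * δ) → S ≤ 1 / (2 * δ) →
      ∀ s, |s| ≤ S → ∀ θ, c ≤ θ → 
        ‖∫ v in (s * t ^ ((n:ℝ)⁻¹))..θ, TT n α t ψ v‖ ≤ C * (t + δ ^ n) := by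
  have hg := chi_good h h1
  obtain ⟨B, hB1, hB, hB'⟩ := cut_bounds h
  obtain ⟨D, hD, hDb⟩ := TT_decay n hα0 hα hα2 hg hc
  refine ⟨D / c ^ 2 + 2 * (B * (n ^ 2 + 2) * 2 ^ n), by positivity, ?_⟩
  intro t δ ht ht1 hδ hδ1 hδS s hs θ hθ
  have hδ0 : 0 < δ := by rw [hδ]; positivity
  set a := t ^ ((n:ℝ)⁻¹) with ha
  have ha0 : 0 < a := by positivity
  set A := 1 / (2 * δ) with hA
  have h12 : ψ (1/2) = 0 := h1 _ (by rw [abs_of_pos] <;> norm_num)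
  obtain ⟨L₁, hL1, hL1b⟩ := vdc_scaled hn (by linarith : 0 ≤ B) ψ h.smooth h12 hB hB' hδ0 hδ1 hδS hs
  obtain ⟨L₂, hL2, hL2b⟩ := vdc_scaled hn (by linarith : 0 ≤ B) ψ h.smooth h12 hB hB' hδ0 hδ1 hδS ((abs_neg s).trans_le hs)
  have hp2 : ‖(1 / (2 * Real.pi * Complex.I) : ℂ)‖ ≤ 1 := by
    simp [abs_of_pos Real.pi_pos]
    have := Real.pi_gt_three
    have h3 : Real.pi⁻¹ ≤ 1 := inv_le_one_of_one_le₀ (by linarith)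
    have h4 : 0 < Real.pi⁻¹ := by positivity
    linarith
  have hχc : Continuous fun u => ((δ * (ψ (δ * u) / (δ * u)) : ℝ) : ℂ) * ee (u ^ n + s * u) := by
    refine Continuous.mul (Complex.continuous_ofReal.comp (continuous_const.mul ?_)) (ee_cont.comp (by fun_prop))
    exact hg.smooth.continuous.comp (continuous_const.mul continuous_id)
  have e1 : (t ^ α : ℝ) * TT n α t (fun z => ψ z / z) (s * a) = 
      ∫ u, ((δ * (ψ (δ * u) / (δ * u)) : ℝ) : ℂ) * ee (u ^ n + s * u) := by
    have := Measure.integral_comp_mul_left (fun u => ((δ * (ψ (δ * u) / (δ * u)) : ℝ) : ℂ) * ee (u ^ n + s * u)) a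
    rw [abs_of_pos (by positivity : 0 < a⁻¹), eq_inv_smul_iff₀ ha0.ne'] at this
    rw [← this, Complex.real_smul, ← integral_const_mul]
    unfold TT
    rw [← integral_const_mul]
    congr 1; ext y
    have hδa : δ * (a * y) = y * t ^ α := by rw [hδ, ha, scale_delta ht]
    have hda : δ * a = t ^ α := by 
      have := scale_delta (α := α) (n := n) ht 1
      rw [← ha, ← hδ] at this; linarith
    simp only [GG]
    rw [hδa, ha, scale_pow hn ht, ← ha, ee_add, show s * (a * y) = s * a * y by ring, ← hda]
    push_cast
    ring
  have e2 : ∫ u, ((δ * (ψ (δ * u) / (δ * u)) : ℝ) : ℂ) * ee (u ^ n + s * u) = L₁ + L₂ := by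
    refine tendsto_nhds_unique (f := fun _ : ℝ => ∫ u, ((δ * (ψ (δ * u) / (δ * u)) : ℝ) : ℂ) * ee (u ^ n + s * u)) (l := atTop) tendsto_const_nhds ?_
    refine (hL1.add hL2).congr' ?_
    filter_upwards [eventually_ge_atTop (2 / δ), eventually_ge_atTop A] with R hR hRA
    have hR0 : 0 ≤ R := le_trans (by positivity) hR
    rw [integral_cut hR0 (g := fun u => ((δ * (ψ (δ * u) / (δ * u)) : ℝ) : ℂ) * ee (u ^ n + s * u))]
    swap
    · intro u hu
      rw [h.supp]; · simp
      rw [abs_mul, abs_of_pos hδ0]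
      have := (div_le_iff₀ hδ0).1 (hR.trans hu)
      linarith
    rw [fold_integral (fun u => ((δ * (ψ (δ * u) / (δ * u)) : ℝ) : ℂ) * ee (u ^ n + s * u)) hχc (A := A) ?_ (by positivity)]
    · rw [← intervalIntegral.integral_add]
      · apply intervalIntegral.integral_congr
        intro u hu
        rw [Set.uIcc_of_le hRA] at hu
        have hu0 : u ≠ 0 := by have := hu.1; intro h; linarith
        simp only
        have q1 : δ * (ψ (δ * u) / (δ * u)) = ψ (δ * u) / u := by field_simp
        have q2 : δ * (ψ (δ * -u) / (δ * -u)) = ψ (δ * u) / u := by rw [mul_neg, hodd, neg_div_neg_eq, q1]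
        rw [q1, q2, hne.neg_pow, show s * -u = -s * u by ring]
      all_goals
        apply ContinuousOn.intervalIntegrable
        rw [Set.uIcc_of_le hRA]
        apply ContinuousOn.mul
        · apply Complex.continuous_ofReal.comp_continuousOn
          apply ContinuousOn.div
          · exact (h.smooth.continuous.comp (by fun_prop)).continuousOn
          · fun_prop
          · intro u hu; have := hu.1; intro h; linarith
        · exact (ee_cont.comp (by fun_prop)).continuousOn
    · intro u hu
      rw [h1]; · simp
      rw [abs_mul, abs_of_pos hδ0]
      calc δ * |u| ≤ δ * A := by have := hu.le; gcongr
        _ = 1 / 2 := by rw [hA]; field_simp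
  have e3 : ‖((t ^ α : ℝ) : ℂ) * TT n α t (fun z => ψ z / z) θ‖ ≤ D / c ^ 2 * t := by
    rw [norm_mul, Complex.norm_real, Real.norm_of_nonneg (by positivity)]
    have b1 : t ^ α ≤ 1 := Real.rpow_le_one ht.le ht1 hα0.le
    have b2 := hDb t ht ht1 θ (hθ.trans (le_abs_self θ))
    calc _ ≤ 1 * (D * t / θ ^ 2) := by gcongr
      _ ≤ 1 * (D * t / c ^ 2) := by gcongr
      _ = _ := by ring
  rw [odd_ftc ht h h1]
  have e4 : (t ^ α : ℝ) / (2 * Real.pi * Complex.I) * 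
      (TT n α t (fun z => ψ z / z) θ - TT n α t (fun z => ψ z / z) (s * a)) = 
      (1 / (2 * Real.pi * Complex.I)) * ((t ^ α : ℝ) * TT n α t (fun z => ψ z / z) θ - (L₁ + L₂)) := by
    rw [← e2, ← e1]; ring
  rw [e4, norm_mul]
  rw [mul_pow] at hL1b hL2b
  have hδn : 0 < δ ^ n := by positivity
  have hq : 0 < D / c ^ 2 * δ ^ n := by positivity
  have hq2 : 0 < 2 * (B * (n ^ 2 + 2) * 2 ^ n) * t := by positivity
  calc _ ≤ 1 * (D / c ^ 2 * t + (‖L₁‖ + ‖L₂‖)) := by 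
        gcongr; exact (norm_sub_le _ _).trans (add_le_add e3 (norm_add_le _ _))
    _ ≤ _ := by nlinarith

lemma Theta_cont {n : ℕ} {α t : ℝ} (ht : 0 < t) {φ : ℝ → ℝ} (h : GoodCut φ) :
    Continuous fun v : ℝ => ∑' k : ℤ, GG n α t φ k * ee (v * k) := by
  obtain ⟨K, hK⟩ := exists_nat_ge (2 * t ^ (-α))
  have e1 : ∀ v, ∑' k : ℤ, GG n α t φ k * ee (v * k) = ∑ k ∈ Finset.Icc (-(K:ℤ)) K, GG n α t φ k * ee (v * k) := by
    intro v
    apply tsum_eq_sum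
    intro k hk
    have : 2 * t ^ (-α) ≤ |(k:ℝ)| := by
      refine hK.trans ?_
      have : (K:ℤ) ≤ |k| := by
        by_contra hlt
        push Not at hlt
        rw [abs_lt] at hlt
        exact hk (Finset.mem_Icc.2 ⟨hlt.1.le, hlt.2.le⟩)
      exact_mod_cast this
    rw [GG_zero ht h this, zero_mul]
  simp_rw [e1]
  exact continuous_finsetSum _ fun k _ => continuous_const.mul (ee_cont.comp (by fun_prop))

lemma TT_split {n : ℕ} {α t : ℝ} (ht : 0 < t) {φ ψ₁ ψ₂ : ℝ → ℝ} (h1 : GoodCut ψ₁) (h2 : GoodCut ψ₂)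
    (h : ∀ x, φ x = ψ₁ x + ψ₂ x) (v : ℝ) : TT n α t φ v = TT n α t ψ₁ v + TT n α t ψ₂ v := by
  have hi : ∀ {ψ : ℝ → ℝ}, GoodCut ψ → Integrable fun y => GG n α t ψ y * ee (v * y) := by
    intro ψ hg
    apply Continuous.integrable_of_hasCompactSupport
    · exact (GG_contDiff n α t hg).continuous.mul (ee_cont.comp (by fun_prop))
    · exact (GG_hcs ht hg).mul_right
  unfold TT
  rw [← integral_add (hi h1) (hi h2)]
  congr 1; ext y
  simp only [GG, h]
  push_cast
  ring

lemma small_pow {p ε : ℝ} (hp : 0 < p) (hε : 0 < ε) : ∃ t₁ : ℝ, 0 < t₁ ∧ ∀ t, 0 < t → t ≤ t₁ → t ^ p ≤ ε := by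
  refine ⟨ε ^ p⁻¹, by positivity, fun t ht h => ?_⟩
  calc t ^ p ≤ (ε ^ p⁻¹) ^ p := Real.rpow_le_rpow ht.le h hp.le
    _ = ε := by rw [← Real.rpow_mul hε.le, inv_mul_cancel₀ hp.ne', Real.rpow_one]

/-- `n` even: with `I(s) = (1/2π)·lim_{R→∞}∫_{−R}^R e(y^n)sin(2πsy)dy/y`,
there are `C > 0`, `t₁ > 0` such that for `0 < t ≤ t₁` and `s ∈ [−S,S]`, `I(s)` exists and
`|U*(t, γ + s·t^{1/n}) − (1/2 − I(s))| ≤ C·t^{αn−1}`. -/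
theorem stmt19 (n : ℕ) (hn : 2 ≤ n) (hne : Even n) (Δ : ℝ) (hΔ0 : 0 < Δ) (hΔ1 : Δ < 1)
    (hΔ2 : n = 2 → Δ < 1 / 2) (γ : ℝ) (hγ : γ ∈ Set.Ioo (0 : ℝ) (1 / 2))
    (α : ℝ) (hα1 : ((n : ℝ) - Δ)⁻¹ < α) (hα2 : α < ((n : ℝ) - 1)⁻¹)
    (S : ℝ) (hS : 0 < S) (φ : ℝ → ℝ) (hφ : GoodPhi φ) :
    ∃ C > (0 : ℝ), ∃ t₁ > (0 : ℝ), ∀ t ∈ Set.Ioc (0 : ℝ) t₁, ∀ s ∈ Set.Icc (-S) S,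
      ∃ Is : ℂ,
        Tendsto (fun R : ℝ => Complex.ofReal (1 / (2 * Real.pi)) * Iint n s R)
          atTop (nhds Is) ∧
        ‖Ustar n γ φ α t (γ + s * t ^ ((n : ℝ)⁻¹)) - (1 / 2 - Is)‖ ≤
          C * t ^ (α * n - 1) := by
  have hn2 : (2:ℝ) ≤ n := by exact_mod_cast hn
  have hn0 : (0:ℝ) < n := by linarith
  have hα0 : 0 < α := lt_trans (by apply inv_pos.2; linarith) hα1
  have hαn : 1 < α * n := by
    have h1 : (n:ℝ)⁻¹ < α := lt_trans (by apply inv_strictAnti₀ <;> linarith) hα1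
    rwa [inv_lt_iff_one_lt_mul₀ hn0] at h1
  have hα3 : 0 < 1 - α * (n - 1) := by
    have := (lt_inv_comm₀ hα0 (by linarith)).1 hα2
    have h2 := mul_lt_mul_of_pos_left this hα0
    rw [mul_inv_cancel₀ hα0.ne'] at h2
    linarith
  obtain ⟨hsm, hφ1, hφ2, -⟩ := hφ
  have hG : GoodCut φ := ⟨hsm, hφ2⟩
  have hsm' : ContDiff ℝ (⊤ : ℕ∞) fun z => φ (-z) := hsm.comp contDiff_neg
  set φe : ℝ → ℝ := fun z => (φ z + φ (-z)) / 2 with hφe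
  set φo : ℝ → ℝ := fun z => (φ z - φ (-z)) / 2 with hφo
  have hGe : GoodCut φe := ⟨(hsm.add hsm').div_const 2, fun x hx => by
    simp only [hφe]; rw [hφ2 x hx, hφ2 (-x) (by rwa [abs_neg])]; norm_num⟩
  have hGo : GoodCut φo := ⟨(hsm.sub hsm').div_const 2, fun x hx => by
    simp only [hφo]; rw [hφ2 x hx, hφ2 (-x) (by rwa [abs_neg])]; norm_num⟩
  have he1 : ∀ x, |x| ≤ 1 / 2 → φe x = 1 := fun x hx => by
    simp only [hφe]; rw [hφ1 x hx, hφ1 (-x) (by rwa [abs_neg])]; norm_num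
  have ho1 : ∀ x, |x| ≤ 1 / 2 → φo x = 0 := fun x hx => by
    simp only [hφo]; rw [hφ1 x hx, hφ1 (-x) (by rwa [abs_neg])]; norm_num
  have hev : ∀ x, φe (-x) = φe x := fun x => by simp only [hφe, neg_neg]; ring
  have hodd : ∀ x, φo (-x) = -φo x := fun x => by simp only [hφo, neg_neg]; ring
  have hsum : ∀ x, φ x = φe x + φo x := fun x => by simp only [hφe, hφo]; ring
  obtain ⟨hγ0, hγ1⟩ := hγ
  set c := (1 - 2 * γ) / 2 with hc
  have hc0 : 0 < c := by rw [hc]; linarith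
  obtain ⟨C₁, hC1, hb1⟩ := poisson_bound n hα0 hαn.le hα3 hG hc0
  obtain ⟨C₂, hC2, hb2⟩ := half_TT hn hne hα0 hαn.le hα3 hGe (he1 0 (by norm_num)) hev hγ0
  obtain ⟨C₃, hC3, hb3⟩ := even_main (α := α) hn hne hGe he1 hev S
  obtain ⟨C₄, hC4, hb4⟩ := odd_main hn hne hα0 hαn.le hα3 hGo ho1 hodd S hγ0
  have hp : 0 < α - (n:ℝ)⁻¹ := by
    have : (n:ℝ)⁻¹ < α := by rwa [inv_lt_iff_one_lt_mul₀ hn0]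
    linarith
  obtain ⟨τ₁, hτ1, hs1⟩ := small_pow hp (show (0:ℝ) < 1 / (2 * (1 + S)) by positivity)
  obtain ⟨τ₂, hτ2, hs2⟩ := small_pow (show 0 < (n:ℝ)⁻¹ by positivity) (show (0:ℝ) < min γ c / S by positivity)
  refine ⟨C₁ * (2 * γ) + C₂ + C₃ + 2 * C₄, by positivity, min 1 (min τ₁ τ₂), by positivity, ?_⟩
  rintro t ⟨ht, htt⟩ s ⟨hsl, hsu⟩
  have ht1 : t ≤ 1 := htt.trans (min_le_left _ _)
  have hδs := hs1 t ht (htt.trans ((min_le_right _ _).trans (min_le_left _ _)))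
  have has := hs2 t ht (htt.trans ((min_le_right _ _).trans (min_le_right _ _)))
  have hsS : |s| ≤ S := abs_le.2 ⟨hsl, hsu⟩
  set δ := t ^ (α - (n:ℝ)⁻¹) with hδ
  set a := t ^ ((n:ℝ)⁻¹) with ha
  have hδ0 : 0 < δ := by positivity
  have ha0 : 0 < a := by positivity
  have hδ2 : 1 + S ≤ 1 / (2 * δ) := by
    rw [le_div_iff₀ (by positivity)] at hδs ⊢
    linarith
  have hδn : δ ^ n = t ^ (α * n - 1) := by
    rw [hδ, ← Real.rpow_natCast, ← Real.rpow_mul ht.le]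
    congr 1; field_simp
  have htd : t ≤ t ^ (α * n - 1) := by
    conv_lhs => rw [← Real.rpow_one t]
    apply Real.rpow_le_rpow_of_exponent_ge ht ht1
    have : 1 < (n:ℝ) := by linarith
    nlinarith
  have hσ : |s * a| ≤ min γ c := by
    rw [abs_mul, abs_of_pos ha0]
    calc |s| * a ≤ S * (min γ c / S) := by gcongr
      _ = _ := by field_simp
  have hσγ := abs_le.1 (hσ.trans (min_le_left _ _))
  have hσc := abs_le.1 (hσ.trans (min_le_right _ _))
  obtain ⟨hTe, hhalf⟩ := hb2 t ht ht1
  obtain ⟨Is, hIs, hIb⟩ := hb3 t δ ht hδ (by linarith) (by linarith) hTe s hsS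
  refine ⟨Is, hIs, ?_⟩
  have hO := hb4 t δ ht ht1 hδ (by linarith) (by linarith) s hsS (2 * γ + s * a) (by linarith [hσγ.1])
  have hH := hhalf (2 * γ + s * a) (by linarith [hσγ.1])
  rw [← ha] at hIb hO
  have cφ := (TT_schw (n := n) (α := α) ht hG).2.1
  have ce := (TT_schw (n := n) (α := α) ht hGe).2.1
  have co := (TT_schw (n := n) (α := α) ht hGo).2.1
  rw [Ustar_eq hn ht hG (hφ1 0 (by norm_num))]
  have hP : ‖(∫ v in (s * a)..(2 * γ + s * a), ∑' k : ℤ, GG n α t φ k * ee (v * k)) - 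
      ∫ v in (s * a)..(2 * γ + s * a), TT n α t φ v‖ ≤ C₁ * t * (2 * γ) := by
    rw [← intervalIntegral.integral_sub ((Theta_cont ht hG).intervalIntegrable _ _) (cφ.intervalIntegrable _ _)]
    refine (intervalIntegral.norm_integral_le_of_norm_le_const (C := C₁ * t) ?_).trans_eq ?_
    · intro v hv
      rw [Set.uIoc_of_le (by linarith)] at hv
      apply hb1 t ht ht1
      rw [abs_le]
      constructor <;> linarith [hv.1, hv.2, hσc.1, hσc.2]
    · rw [show 2 * γ + s * a - s * a = 2 * γ by ring, abs_of_pos (by linarith)]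
  have hsplit : ∫ v in (s * a)..(2 * γ + s * a), TT n α t φ v = 
      ((∫ v in (0:ℝ)..(2 * γ + s * a), TT n α t φe v) - ∫ v in (0:ℝ)..(s * a), TT n α t φe v) + 
        ∫ v in (s * a)..(2 * γ + s * a), TT n α t φo v := by
    rw [intervalIntegral.integral_interval_sub_left (ce.intervalIntegrable _ _) (ce.intervalIntegrable _ _),
      ← intervalIntegral.integral_add (ce.intervalIntegrable _ _) (co.intervalIntegrable _ _)]
    congr 1; ext v
    exact TT_split ht hGe hGo hsum v
  rw [hδn] at hIb hO
  set X := ∫ v in (s * a)..(2 * γ + s * a), ∑' k : ℤ, GG n α t φ k * ee (v * k)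
  set Y := ∫ v in (s * a)..(2 * γ + s * a), TT n α t φ v
  set Z₁ := ∫ v in (0:ℝ)..(2 * γ + s * a), TT n α t φe v
  set Z₂ := ∫ v in (0:ℝ)..(s * a), TT n α t φe v
  set Z₃ := ∫ v in (s * a)..(2 * γ + s * a), TT n α t φo v
  have hfin : X - (1 / 2 - Is) = (X - Y) + (Z₁ - 1 / 2) - (Z₂ - Is) + Z₃ := by rw [hsplit]; ring
  rw [hfin]
  set q := t ^ (α * n - 1)
  calc _ ≤ ‖X - Y‖ + ‖Z₁ - 1 / 2‖ + ‖Z₂ - Is‖ + ‖Z₃‖ := 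
        (norm_add_le _ _).trans (add_le_add_left ((norm_sub_le _ _).trans (add_le_add_left (norm_add_le _ _) _)) _)
    _ ≤ C₁ * t * (2 * γ) + C₂ * t + C₃ * q + C₄ * (t + q) := by gcongr
    _ ≤ C₁ * q * (2 * γ) + C₂ * q + C₃ * q + C₄ * (q + q) := by gcongr
    _ = _ := by ring
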